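/- arXiv:1910.12307 — 3 statements merged into one kernel-verified Lean document; each statement's English description precedes it below -/
import Mathlib

section
/- Let A ∈ M_{2n}(ℂ) be normal (AᴴA = AAᴴ) and Hamiltonian (JᵀAᴴJ = −A, J = J_{2n}). If A is diagonalizable by a symplectic similarity transformation, then A is diagonalizable by a matrix that is simultaneously unitary and symplectic. -/
open Matrix

/-- The matrix `J_{2n} = [[0, I], [-I, 0]]`. -/
def Jmat (n : ℕ) : Matrix (Fin n ⊕ Fin n) (Fin n ⊕ Fin n) ℂ :=
  Matrix.fromBlocks 0 1 (-1) 0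

section PolarDecomposition

open scoped ComplexOrder MatrixOrder Matrix.Norms.L2Operator

variable {m : Type*} [Fintype m] [DecidableEq m]

/-- If `S` preserves the sesquilinear form of a unitary matrix `J`, then `S` is inverted by
`Jᴴ * Sᴴ * J`. -/
lemma inv_eq_of_conjTranspose_mul_mul_eq {J S : Matrix m m ℂ} (hJ : Jᴴ * J = 1)
    (hS : Sᴴ * J * S = J) : S⁻¹ = Jᴴ * Sᴴ * J := by
  apply Matrix.inv_eq_left_inv
  rw [← hJ, mul_assoc Jᴴ, mul_assoc Jᴴ, hS]

/-- The positive polar factor of a matrix preserving the form of a unitary `J` is inverted by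
conjugation with `J`; equivalently, it preserves the form as well. -/
lemma inv_sqrt_eq_of_conjTranspose_mul_mul_eq {J S : Matrix m m ℂ} (hJ : Jᴴ * J = 1)
    (hS : Sᴴ * J * S = J) :
    (CFC.sqrt (Sᴴ * S))⁻¹ = Jᴴ * CFC.sqrt (Sᴴ * S) * J := by
  have hJ' : J * Jᴴ = 1 := mul_eq_one_comm.mp hJ
  have hP : (Sᴴ * S).PosSemidef := posSemidef_conjTranspose_mul_self S
  have hPinv : (Sᴴ * S)⁻¹ = Jᴴ * (Sᴴ * S) * J := by
    rw [Matrix.mul_inv_rev, ← conjTranspose_nonsing_inv,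
      inv_eq_of_conjTranspose_mul_mul_eq hJ hS]
    simp only [conjTranspose_mul, conjTranspose_conjTranspose, mul_assoc]
    rw [← mul_assoc J Jᴴ, hJ', one_mul]
  have hM : (CFC.sqrt (Sᴴ * S)).PosSemidef := (CFC.sqrt_nonneg _).posSemidef
  rw [hP.inv_sqrt, hPinv]
  refine CFC.sqrt_unique ?_ (hM.conjTranspose_mul_mul_same J).nonneg
  rw [show Jᴴ * CFC.sqrt (Sᴴ * S) * J * (Jᴴ * CFC.sqrt (Sᴴ * S) * J)
      = Jᴴ * (CFC.sqrt (Sᴴ * S) * (J * Jᴴ) * CFC.sqrt (Sᴴ * S)) * J by simp only [mul_assoc],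
    hJ', mul_one, CFC.sqrt_mul_sqrt_self _ hP.nonneg]

/-- If `S` intertwines two normal matrices, its positive polar factor commutes with the source. -/
lemma commute_sqrt_conjTranspose_mul_self {A D S : Matrix m m ℂ} (hA : IsStarNormal A)
    (hD : IsStarNormal D) (h : S * D = A * S) : Commute (CFC.sqrt (Sᴴ * S)) D := by
  have h' : S * Dᴴ = Aᴴ * S := SemiconjBy.star_right hD hA h
  have h'' : D * Sᴴ = Sᴴ * A := by simpa using congrArg conjTranspose h'
  refine Commute.cfcₙ_nnreal (?_ : Sᴴ * S * D = D * (Sᴴ * S)) _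
  rw [mul_assoc, h, ← mul_assoc, ← h'', mul_assoc]

/-- If `S` preserves the form of a unitary `J` and conjugates a normal matrix to a normal matrix
`D`, then some unitary preserving the form conjugates it to `D` as well. -/
lemma exists_unitary_inv_mul_mul_eq {J A D S : Matrix m m ℂ} (hJ : Jᴴ * J = 1)
    (hS : Sᴴ * J * S = J) (hA : IsStarNormal A) (hD : IsStarNormal D) (h : S⁻¹ * A * S = D) :
    ∃ U : Matrix m m ℂ, Uᴴ * U = 1 ∧ Uᴴ * J * U = J ∧ U⁻¹ * A * U = D := by
  have hJ' : J * Jᴴ = 1 := mul_eq_one_comm.mp hJ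
  have hSl : S⁻¹ * S = 1 := by
    rw [inv_eq_of_conjTranspose_mul_mul_eq hJ hS, mul_assoc Jᴴ, mul_assoc Jᴴ, hS, hJ]
  have hSr : S * S⁻¹ = 1 := mul_eq_one_comm.mp hSl
  have hcomm : Commute (CFC.sqrt (Sᴴ * S)) D :=
    commute_sqrt_conjTranspose_mul_self hA hD (by
      rw [← h, ← mul_assoc, ← mul_assoc, hSr, one_mul])
  have hP : (Sᴴ * S).PosSemidef := posSemidef_conjTranspose_mul_self S
  have hsq := CFC.sqrt_mul_sqrt_self _ hP.nonneg
  have hinv := inv_sqrt_eq_of_conjTranspose_mul_mul_eq hJ hS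
  have hherm : (CFC.sqrt (Sᴴ * S))ᴴ = CFC.sqrt (Sᴴ * S) :=
    (CFC.sqrt_nonneg (Sᴴ * S)).posSemidef.isHermitian
  have hunit : IsUnit (CFC.sqrt (Sᴴ * S)).det := by
    have hdet : IsUnit (Sᴴ * S).det := by
      have := Matrix.isUnit_det_of_left_inverse hSl
      rw [det_mul, det_conjTranspose]
      exact this.star.mul this
    rw [← hsq, det_mul] at hdet
    exact isUnit_of_mul_isUnit_left hdet
  generalize CFC.sqrt (Sᴴ * S) = M at *
  have hMl : M⁻¹ * M = 1 := Matrix.nonsing_inv_mul _ hunit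
  have hMr : M * M⁻¹ = 1 := Matrix.mul_nonsing_inv _ hunit
  have hUH : (S * M⁻¹)ᴴ = M⁻¹ * Sᴴ := by rw [conjTranspose_mul, conjTranspose_nonsing_inv, hherm]
  refine ⟨S * M⁻¹, ?_, ?_, ?_⟩
  · calc (S * M⁻¹)ᴴ * (S * M⁻¹) = M⁻¹ * (Sᴴ * S) * M⁻¹ := by rw [hUH]; simp only [mul_assoc]
      _ = (M⁻¹ * M) * (M * M⁻¹) := by rw [← hsq]; simp only [mul_assoc]
      _ = 1 := by rw [hMl, hMr, one_mul]
  · calc (S * M⁻¹)ᴴ * J * (S * M⁻¹) = M⁻¹ * (Sᴴ * J * S) * M⁻¹ := by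
          rw [hUH]; simp only [mul_assoc]
      _ = M⁻¹ * J * (Jᴴ * M * J) := by rw [hS, ← hinv]
      _ = M⁻¹ * (J * Jᴴ) * M * J := by simp only [mul_assoc]
      _ = J := by rw [hJ', mul_one, hMl, one_mul]
  · calc (S * M⁻¹)⁻¹ * A * (S * M⁻¹) = M * (S⁻¹ * A * S) * M⁻¹ := by
          rw [Matrix.mul_inv_rev, Matrix.nonsing_inv_nonsing_inv _ hunit]; simp only [mul_assoc]
      _ = D := by rw [h, hcomm.eq, mul_assoc, hMr, mul_one]

end PolarDecomposition

lemma Jmat_conjTranspose_mul_self (n : ℕ) : (Jmat n)ᴴ * Jmat n = 1 := by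
  simp [Jmat, fromBlocks_conjTranspose, fromBlocks_multiply]

lemma Matrix.IsDiag.isStarNormal {m : Type*} [Fintype m] [DecidableEq m] {D : Matrix m m ℂ}
    (hD : D.IsDiag) : IsStarNormal D := by
  refine ⟨?_⟩
  rw [← hD.diagonal_diag, star_eq_conjTranspose, diagonal_conjTranspose]
  exact commute_diagonal _ _

theorem stmt15 (n : ℕ) (A : Matrix (Fin n ⊕ Fin n) (Fin n ⊕ Fin n) ℂ)
    (hnorm : Aᴴ * A = A * Aᴴ)
    (hHam : (Jmat n)ᵀ * Aᴴ * Jmat n = -A)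
    (hdiag : ∃ S : Matrix (Fin n ⊕ Fin n) (Fin n ⊕ Fin n) ℂ,
      Sᴴ * Jmat n * S = Jmat n ∧ (S⁻¹ * A * S).IsDiag) :
    ∃ U : Matrix (Fin n ⊕ Fin n) (Fin n ⊕ Fin n) ℂ,
      Uᴴ * U = 1 ∧ Uᴴ * Jmat n * U = Jmat n ∧ (U⁻¹ * A * U).IsDiag := by
  obtain ⟨S, hS, hD⟩ := hdiag
  obtain ⟨U, hU, hUJ, hUD⟩ := exists_unitary_inv_mul_mul_eq (Jmat_conjTranspose_mul_self n) hS
    ⟨hnorm⟩ hD.isStarNormal rfl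
  exact ⟨U, hU, hUJ, hUD ▸ hD⟩
end

section
/- A matrix A ∈ M_{2n}(ℂ) is normal, Hamiltonian, and symplectically diagonalizable if and only if A = N − N⋆ for some normal matrix N ∈ M_{2n}(ℂ) satisfying NN⋆ = N⋆N = 0, where N⋆ = J⁻¹NᴴJ with J = J_{2n}. -/
open Matrix

open Module.End in
lemma LinearMap.exists_orthonormalBasis_eigenvectors_of_commute_adjoint {E ι : Type*}
    [NormedAddCommGroup E] [InnerProductSpace ℂ E] [FiniteDimensional ℂ E] [Fintype ι]
    (hι : Module.finrank ℂ E = Fintype.card ι) (T : E →ₗ[ℂ] E) (hT : Commute T.adjoint T) :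
    ∃ (b : OrthonormalBasis ι ℂ E) (μ : ι → ℂ), ∀ i, T (b i) = μ i • b i := by
  classical
  set A : E →ₗ[ℂ] E := T + T.adjoint with hAdef
  set B : E →ₗ[ℂ] E := Complex.I • (T - T.adjoint) with hBdef
  have hA : A.IsSymmetric := by
    rw [LinearMap.isSymmetric_iff_isSelfAdjoint, LinearMap.isSelfAdjoint_iff']
    simp [hAdef, add_comm]
  have hB : B.IsSymmetric := by
    rw [LinearMap.isSymmetric_iff_isSelfAdjoint, LinearMap.isSelfAdjoint_iff']
    rw [hBdef, map_smulₛₗ, map_sub, LinearMap.adjoint_adjoint, Complex.conj_I, neg_smul,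
      ← smul_neg, neg_sub]
  have hAB : Commute A B := by
    refine Commute.smul_right ?_ _
    exact ((Commute.refl T).add_left hT).sub_right (hT.symm.add_left (Commute.refl _))
  let V : Eigenvalues B × Eigenvalues A → Submodule ℂ E :=
    fun i => eigenspace A (i.2 : ℂ) ⊓ eigenspace B (i.1 : ℂ)
  have hV : OrthogonalFamily ℂ (fun i => V i) fun i => (V i).subtypeₗᵢ :=
    (LinearMap.IsSymmetric.orthogonalFamily_eigenspace_inf_eigenspace hA hB).comp
      (f := fun i : Eigenvalues B × Eigenvalues A => ((i.1 : ℂ), (i.2 : ℂ)))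
      fun i j h => Prod.ext (Subtype.ext (congrArg Prod.fst h)) (Subtype.ext (congrArg Prod.snd h))
  have hsum : DirectSum.IsInternal V := by
    rw [hV.isInternal_iff, Submodule.orthogonal_eq_bot_iff, eq_top_iff,
      ← LinearMap.IsSymmetric.iSup_iSup_eigenspace_inf_eigenspace_eq_top_of_commute hA hB hAB]
    refine iSup_le fun α => iSup_le fun γ => ?_
    by_cases hα : HasEigenvalue A α
    · by_cases hγ : HasEigenvalue B γ
      · exact le_iSup V (⟨γ, hγ⟩, ⟨α, hα⟩)
      · have : eigenspace B γ = ⊥ := by simpa [HasEigenvalue, HasUnifEigenvalue] using hγ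
        simp [this]
    · have : eigenspace A α = ⊥ := by simpa [HasEigenvalue, HasUnifEigenvalue] using hα
      simp [this]
  let b := hsum.subordinateOrthonormalBasis rfl hV
  let e : Fin (Module.finrank ℂ E) ≃ ι := Fintype.equivOfCardEq (by simpa using hι)
  let k := fun i => hsum.subordinateOrthonormalBasisIndex rfl (e.symm i) hV
  refine ⟨b.reindex e, fun i => ((k i).2 - Complex.I * (k i).1) / 2, fun i => ?_⟩
  have hmem := hsum.subordinateOrthonormalBasis_subordinate rfl (e.symm i) hV
  obtain ⟨h1, h2⟩ := Submodule.mem_inf.mp hmem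
  rw [mem_eigenspace_iff] at h1 h2
  have hTeq : T = (1 / 2 : ℂ) • (A - Complex.I • B) := by
    simp only [hAdef, hBdef, smul_smul, Complex.I_mul_I]
    module
  rw [OrthonormalBasis.reindex_apply, hTeq]
  simp only [LinearMap.smul_apply, LinearMap.sub_apply, b, h1, h2, k]
  module

lemma Matrix.exists_unitary_diagonalization {m : Type*} [Fintype m] [DecidableEq m]
    (N : Matrix m m ℂ) (hN : Nᴴ * N = N * Nᴴ) :
    ∃ (W : Matrix m m ℂ) (μ : m → ℂ), Wᴴ * W = 1 ∧ N * W = W * diagonal μ := by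
  have hT : Commute (toEuclideanLin N).adjoint (toEuclideanLin N) := by
    rw [← toEuclideanLin_conjTranspose_eq_adjoint, Commute, SemiconjBy]
    ext v : 1
    simp [toLpLin_apply, mulVec_mulVec, hN]
  obtain ⟨b, μ, hb⟩ := LinearMap.exists_orthonormalBasis_eigenvectors_of_commute_adjoint
    (ι := m) (by simp) _ hT
  refine ⟨of fun i j => b j i, μ, ?_, ?_⟩
  · ext i j
    have := orthonormal_iff_ite.mp b.orthonormal i j
    simpa [mul_apply, one_apply, PiLp.inner_apply, mul_comm] using this
  · ext i j
    have := congrArg (fun v : EuclideanSpace ℂ m => v i) (hb j)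
    rw [mul_diagonal]
    simpa [toLpLin_apply, mul_apply, mulVec, dotProduct, mul_comm] using this

lemma Jmat_transpose (n : ℕ) : (Jmat n)ᵀ = -Jmat n := by
  simp [Jmat, fromBlocks_transpose, fromBlocks_neg]

lemma Jmat_conjTranspose (n : ℕ) : (Jmat n)ᴴ = -Jmat n := by
  simp [Jmat, fromBlocks_conjTranspose, fromBlocks_neg]

lemma Jmat_mul_Jmat (n : ℕ) : Jmat n * Jmat n = -1 := by
  rw [Jmat, fromBlocks_multiply, ← fromBlocks_one, fromBlocks_neg]
  simp

open scoped Matrix.Norms.L2Operator in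
lemma Matrix.conjTranspose_mul_eq_of_mul_eq {m : Type*} [Fintype m] [DecidableEq m]
    {A D S : Matrix m m ℂ} (hA : Aᴴ * A = A * Aᴴ) (hD : Dᴴ * D = D * Dᴴ)
    (h : S * D = A * S) : S * Dᴴ = Aᴴ * S :=
  SemiconjBy.star_right (a := D) (b := A) (x := S) ⟨hD⟩ ⟨hA⟩ h

lemma Matrix.IsDiag.conjTranspose_mul_self_comm {m : Type*} [Fintype m] [DecidableEq m]
    {D : Matrix m m ℂ} (hD : D.IsDiag) : Dᴴ * D = D * Dᴴ := by
  rw [← hD.diagonal_diag, diagonal_conjTranspose, diagonal_mul_diagonal, diagonal_mul_diagonal]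
  simp [mul_comm]

open scoped ComplexOrder MatrixOrder Matrix.Norms.L2Operator in
/-- The unitary polar factor of a symplectic matrix is symplectic. -/
lemma exists_unitary_symplectic_diagonalization {n : ℕ}
    {A S : Matrix (Fin n ⊕ Fin n) (Fin n ⊕ Fin n) ℂ} (hA : Aᴴ * A = A * Aᴴ)
    (hS : Sᴴ * Jmat n * S = Jmat n) (hD : (S⁻¹ * A * S).IsDiag) :
    ∃ U D : Matrix (Fin n ⊕ Fin n) (Fin n ⊕ Fin n) ℂ,
      Uᴴ * U = 1 ∧ U * Jmat n = Jmat n * U ∧ D.IsDiag ∧ A = U * D * Uᴴ := by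
  have hJ := Jmat_mul_Jmat n
  have hSleft : (-(Jmat n) * Sᴴ * Jmat n) * S = 1 := by
    rw [mul_assoc, mul_assoc, ← mul_assoc Sᴴ, hS, neg_mul, hJ, neg_neg]
  have hSright := mul_eq_one_comm.mp hSleft
  have hSinv : S⁻¹ = -(Jmat n) * Sᴴ * Jmat n := inv_eq_left_inv hSleft
  have hSS : S * S⁻¹ = 1 := by rw [hSinv, hSright]
  set D := S⁻¹ * A * S with hDdef
  have hSD : S * D = A * S := by rw [hDdef, ← mul_assoc, ← mul_assoc, hSS, one_mul]
  have hSD' := conjTranspose_mul_eq_of_mul_eq hA hD.conjTranspose_mul_self_comm hSD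
  set R := Sᴴ * S with hR
  have hRpos : R.PosSemidef := posSemidef_conjTranspose_mul_self S
  have hRD : Commute R D := by
    have h := congrArg conjTranspose hSD'
    simp only [conjTranspose_mul, conjTranspose_conjTranspose] at h
    rw [Commute, SemiconjBy, hR, mul_assoc, hSD, ← mul_assoc, ← h, mul_assoc]
  have hSJS : S * Jmat n * Sᴴ = Jmat n := by
    have h : S * Jmat n * Sᴴ * (Jmat n * Jmat n) = Jmat n * (Jmat n * Jmat n) := by
      have h2 := congrArg (fun X => -(X * Jmat n)) hSright
      simp only [neg_mul, mul_neg, neg_neg, one_mul, ← mul_assoc] at h2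
      simp only [← mul_assoc, h2]
      simp [hJ]
    simpa [hJ] using h
  have hRJR : R * Jmat n * R = Jmat n := by
    calc R * Jmat n * R = Sᴴ * (S * Jmat n * Sᴴ) * S := by simp only [hR, mul_assoc]
      _ = Jmat n := by rw [hSJS, hS]
  have hRright : R * (Jmat n * R * (Jmat n)ᴴ) = 1 := by
    calc _ = R * Jmat n * R * (Jmat n)ᴴ := by simp only [mul_assoc]
      _ = 1 := by rw [hRJR, Jmat_conjTranspose, mul_neg, hJ, neg_neg]
  have hRinv : R⁻¹ = Jmat n * R * (Jmat n)ᴴ := inv_eq_right_inv hRright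
  set P := CFC.sqrt R with hP
  have hPP : P * P = R := CFC.sqrt_mul_sqrt_self R hRpos.nonneg
  have hPpos : P.PosSemidef := (CFC.sqrt_nonneg R).posSemidef
  have hPinv : P⁻¹ = Jmat n * P * (Jmat n)ᴴ := by
    have h : P⁻¹ = CFC.sqrt R⁻¹ := hRpos.inv_sqrt
    rw [h, hRinv]
    refine CFC.sqrt_unique ?_ (hPpos.mul_mul_conjTranspose_same _).nonneg
    calc _ = Jmat n * P * ((Jmat n)ᴴ * Jmat n) * P * (Jmat n)ᴴ := by simp only [mul_assoc]
      _ = Jmat n * (P * P) * (Jmat n)ᴴ := by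
        rw [Jmat_conjTranspose, neg_mul, hJ, neg_neg, mul_one, mul_assoc (Jmat n)]
      _ = _ := by rw [hPP]
  have hRunit : IsUnit R := IsUnit.of_mul_eq_one _ hRright
  have hPunit : IsUnit P := by
    rw [← hPP] at hRunit
    exact isUnit_of_mul_isUnit_left hRunit
  have hPdet := (isUnit_iff_isUnit_det P).mp hPunit
  have hPD : Commute P D := by
    rw [hP, CFC.sqrt]
    exact Commute.cfcₙ_nnreal hRD _
  have hPD' : P⁻¹ * D = D * P⁻¹ := by
    calc P⁻¹ * D = P⁻¹ * (D * P) * P⁻¹ := by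
          rw [mul_assoc, mul_assoc D, mul_nonsing_inv _ hPdet, mul_one]
      _ = D * P⁻¹ := by rw [← hPD.eq, ← mul_assoc, nonsing_inv_mul _ hPdet, one_mul]
  have hPH : P⁻¹ᴴ = P⁻¹ := by rw [conjTranspose_nonsing_inv, hPpos.1.eq]
  set U := S * P⁻¹ with hU
  have hUU : Uᴴ * U = 1 := by
    calc Uᴴ * U = P⁻¹ * R * P⁻¹ := by rw [hU, conjTranspose_mul, hPH, hR]; simp only [mul_assoc]
      _ = 1 := by
        rw [← hPP, ← mul_assoc, nonsing_inv_mul _ hPdet, one_mul, mul_nonsing_inv _ hPdet]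
  have hUU' := mul_eq_one_comm.mp hUU
  have hUJU : Uᴴ * Jmat n * U = Jmat n := by
    calc Uᴴ * Jmat n * U = P⁻¹ * (Sᴴ * Jmat n * S) * P⁻¹ := by
          rw [hU, conjTranspose_mul, hPH]; simp only [mul_assoc]
      _ = Jmat n * P * ((Jmat n)ᴴ * Jmat n) * P⁻¹ := by
        rw [hS]; nth_rewrite 1 [hPinv]; simp only [mul_assoc]
      _ = Jmat n := by
        rw [Jmat_conjTranspose, neg_mul, hJ, neg_neg, mul_one, mul_assoc,
          mul_nonsing_inv _ hPdet, mul_one]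
  refine ⟨U, D, hUU, ?_, hD, ?_⟩
  · calc U * Jmat n = U * (Uᴴ * Jmat n * U) := by rw [hUJU]
      _ = U * Uᴴ * Jmat n * U := by simp only [mul_assoc]
      _ = Jmat n * U := by rw [hUU', one_mul]
  · rw [hU, mul_assoc S, hPD', ← mul_assoc, hSD, mul_assoc A, mul_assoc A, ← hU, hUU', mul_one]

lemma Matrix.orthonormal_columns {ι m : Type*} [Fintype ι] [DecidableEq m] {T : Set m}
    (F : Matrix ι m ℂ) (hF : ∀ i ∈ T, ∀ j ∈ T, (Fᴴ * F) i j = (1 : Matrix m m ℂ) i j) :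
    Orthonormal ℂ fun t : T => (WithLp.toLp 2 fun i => F i t : EuclideanSpace ℂ ι) := by
  rw [orthonormal_iff_ite]
  intro i j
  have := hF i i.2 j j.2
  simpa [mul_apply, one_apply, PiLp.inner_apply, mul_comm, Subtype.ext_iff] using this

/-- Orthonormal columns can be moved along a prescribed injection into a unitary matrix. -/
lemma Matrix.exists_unitary_extending_columns {n : ℕ} {m : Type*} [DecidableEq m]
    {T : Set m} (f : T ↪ Fin n) (F : Matrix (Fin n) m ℂ)
    (hF : ∀ i ∈ T, ∀ j ∈ T, (Fᴴ * F) i j = (1 : Matrix m m ℂ) i j) :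
    ∃ Q : Matrix (Fin n) (Fin n) ℂ, Qᴴ * Q = 1 ∧ ∀ (t : T) i, Q i (f t) = F i t := by
  let c : T → EuclideanSpace ℂ (Fin n) := fun t => WithLp.toLp 2 fun i => F i t
  have hc : Orthonormal ℂ c := orthonormal_columns F hF
  let v : Fin n → EuclideanSpace ℂ (Fin n) := Function.extend f c 0
  have hv : ∀ t, v (f t) = c t := fun t => f.injective.extend_apply c 0 t
  have hvr : Orthonormal ℂ ((Set.range f).domRestrict v) := by
    rw [orthonormal_iff_ite]
    rintro ⟨_, s, rfl⟩ ⟨_, t, rfl⟩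
    simpa [Set.domRestrict, hv, Subtype.ext_iff, f.injective.eq_iff] using
      orthonormal_iff_ite.mp hc s t
  obtain ⟨b, hb⟩ := hvr.exists_orthonormalBasis_extension_of_card_eq (by simp)
  refine ⟨of fun i j => b j i, ?_, fun t i => ?_⟩
  · ext i j
    have := orthonormal_iff_ite.mp b.orthonormal i j
    simpa [mul_apply, one_apply, PiLp.inner_apply, mul_comm] using this
  · simp [hb (f t) ⟨t, rfl⟩, hv, c]

lemma Matrix.exists_embedding_of_orthonormal_columns {n : ℕ} {m : Type*} [Finite m] [DecidableEq m]
    {T : Set m} (F : Matrix (Fin n) m ℂ)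
    (hF : ∀ i ∈ T, ∀ j ∈ T, (Fᴴ * F) i j = (1 : Matrix m m ℂ) i j) :
    Nonempty (T ↪ Fin n) := by
  have := Fintype.ofFinite T
  rw [Function.Embedding.nonempty_iff_card_le]
  simpa using (orthonormal_columns F hF).linearIndependent.fintype_card_le_finrank

/-- Isotropic orthonormal columns extend to a unitary symplectic matrix. -/
lemma exists_unitary_symplectic_extending_columns {n : ℕ} {m : Type*} [Finite m]
    [DecidableEq m] {T : Set m} (W : Matrix (Fin n ⊕ Fin n) m ℂ)
    (hW : ∀ i ∈ T, ∀ j ∈ T, (Wᴴ * W) i j = (1 : Matrix m m ℂ) i j)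
    (hJ : ∀ i ∈ T, ∀ j ∈ T, (Wᴴ * Jmat n * W) i j = 0) :
    ∃ (S : Matrix (Fin n ⊕ Fin n) (Fin n ⊕ Fin n) ℂ) (f : T ↪ Fin n),
      Sᴴ * S = 1 ∧ S * Jmat n = Jmat n * S ∧ ∀ (t : T) i, S i (Sum.inl (f t)) = W i t := by
  let C : ℂ → Matrix (Fin n) (Fin n ⊕ Fin n) ℂ := fun z => fromCols 1 (z • 1)
  have hgram : ∀ z : ℂ, star z * z = 1 → star z = -z →
      ∀ i ∈ T, ∀ j ∈ T, ((C z * W)ᴴ * (C z * W)) i j = (1 : Matrix m m ℂ) i j := by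
    intro z hz hz' i hi j hj
    have hC : (C z)ᴴ * C z = 1 + z • Jmat n := by
      have h : (C z)ᴴ = fromRows 1 (star z • 1) := by
        simp [C, conjTranspose_fromCols_eq_fromRows_conjTranspose]
      rw [h, fromRows_mul_fromCols, Jmat, ← fromBlocks_one, fromBlocks_smul, fromBlocks_add]
      have hz2 : -(z * z) = 1 := by rw [← neg_mul, ← hz', hz]
      simp [smul_smul, hz', ← neg_smul, hz2]
    have : (C z * W)ᴴ * (C z * W) = Wᴴ * W + z • (Wᴴ * Jmat n * W) := by
      rw [conjTranspose_mul, Matrix.mul_assoc, ← Matrix.mul_assoc (C z)ᴴ, hC]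
      simp [Matrix.add_mul, Matrix.mul_add, Matrix.mul_assoc]
    rw [this, Matrix.add_apply, Matrix.smul_apply, hJ i hi j hj, hW i hi j hj, smul_zero, add_zero]
  have ha := hgram (-Complex.I) (by simp) (by simp)
  have hb := hgram Complex.I (by simp) (by simp)
  obtain ⟨f⟩ := exists_embedding_of_orthonormal_columns _ ha
  obtain ⟨P, hP, hPf⟩ := exists_unitary_extending_columns f _ ha
  obtain ⟨Q, hQ, hQf⟩ := exists_unitary_extending_columns f _ hb
  have hrow : ∀ (z : ℂ) i j, (C z * W) i j =
      W (Sum.inl i) j + z * W (Sum.inr i) j := by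
    intro z i j
    simp [C, mul_apply, Fintype.sum_sum_type, one_apply]
  set X : Matrix (Fin n) (Fin n) ℂ := (1 / 2 : ℂ) • (P + Q) with hX
  set Y : Matrix (Fin n) (Fin n) ℂ := (Complex.I / 2) • (P - Q) with hY
  have hXH : Xᴴ = (1 / 2 : ℂ) • (Pᴴ + Qᴴ) := by simp [hX]
  have hYH : Yᴴ = (-Complex.I / 2) • (Pᴴ - Qᴴ) := by simp [hY]
  have hI : Complex.I * Complex.I = -1 := Complex.I_mul_I
  have h1 : Xᴴ * X + Yᴴ * Y = 1 := by
    rw [hXH, hYH, hX, hY]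
    simp only [smul_mul_smul_comm, add_mul, mul_add, sub_mul, mul_sub, hP, hQ]
    have : -Complex.I / 2 * (Complex.I / 2) = 1 / 4 := by linear_combination (-1 / 4) * hI
    rw [this]
    module
  have h2 : Xᴴ * Y = Yᴴ * X := by
    rw [hXH, hYH, hX, hY]
    simp only [smul_mul_smul_comm, add_mul, mul_add, sub_mul, mul_sub, hP, hQ]
    module
  refine ⟨fromBlocks X (-Y) Y X, f, ?_, ?_, ?_⟩
  · rw [fromBlocks_conjTranspose, fromBlocks_multiply, ← fromBlocks_one]
    congr 1
    · simp [h2]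
    · simp [h2]
    · simpa [add_comm] using h1
  · simp [Jmat, fromBlocks_multiply]
  · rintro t (i | i)
    · simp only [fromBlocks_apply₁₁, hX, Matrix.smul_apply, Matrix.add_apply, hPf, hQf, hrow,
        smul_eq_mul]
      ring
    · simp only [fromBlocks_apply₂₁, hY, Matrix.smul_apply, Matrix.sub_apply, hPf, hQf, hrow,
        smul_eq_mul]
      linear_combination (-W (Sum.inr i) t) * hI

lemma Jmat_adjoint_fromBlocks {n : ℕ} (a b c d : Matrix (Fin n) (Fin n) ℂ) :
    (Jmat n)ᵀ * (fromBlocks a b c d)ᴴ * Jmat n = fromBlocks dᴴ (-bᴴ) (-cᴴ) aᴴ := by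
  rw [Jmat_transpose, Jmat, fromBlocks_conjTranspose, fromBlocks_neg, fromBlocks_multiply,
    fromBlocks_multiply]
  simp

lemma Jmat_adjoint_conj {n : ℕ} {S : Matrix (Fin n ⊕ Fin n) (Fin n ⊕ Fin n) ℂ}
    (hS : S * Jmat n = Jmat n * S) (M : Matrix (Fin n ⊕ Fin n) (Fin n ⊕ Fin n) ℂ) :
    (Jmat n)ᵀ * (S * M * Sᴴ)ᴴ * Jmat n = S * ((Jmat n)ᵀ * Mᴴ * Jmat n) * Sᴴ := by
  have hS' : Sᴴ * Jmat n = Jmat n * Sᴴ := by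
    have h := congrArg conjTranspose hS
    simpa [Jmat_conjTranspose] using h.symm
  simp only [conjTranspose_mul, conjTranspose_conjTranspose, Jmat_transpose, neg_mul, mul_neg]
  calc -(Jmat n * (S * (Mᴴ * Sᴴ)) * Jmat n) = -((Jmat n * S) * Mᴴ * (Sᴴ * Jmat n)) := by
        simp only [mul_assoc]
    _ = _ := by rw [hS', ← hS]; simp only [mul_assoc]

lemma Jmat_adjoint_adjoint {n : ℕ} (M : Matrix (Fin n ⊕ Fin n) (Fin n ⊕ Fin n) ℂ) :
    (Jmat n)ᵀ * ((Jmat n)ᵀ * Mᴴ * Jmat n)ᴴ * Jmat n = M := by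
  rw [← fromBlocks_toBlocks M, Jmat_adjoint_fromBlocks, Jmat_adjoint_fromBlocks]
  simp

lemma Matrix.IsDiag.Jmat_adjoint {n : ℕ} {M : Matrix (Fin n ⊕ Fin n) (Fin n ⊕ Fin n) ℂ}
    (hM : M.IsDiag) : ((Jmat n)ᵀ * Mᴴ * Jmat n).IsDiag := by
  rw [← fromBlocks_toBlocks M] at hM ⊢
  rw [Jmat_adjoint_fromBlocks]
  rw [isDiag_fromBlocks_iff] at hM ⊢
  obtain ⟨ha, hb, hc, hd⟩ := hM
  exact ⟨hd.conjTranspose, by simp [hb], by simp [hc], ha.conjTranspose⟩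

lemma Matrix.conj_mul_conj {m : Type*} [Fintype m] [DecidableEq m] {U : Matrix m m ℂ}
    (hU : Uᴴ * U = 1) (X Y : Matrix m m ℂ) :
    (U * X * Uᴴ) * (U * Y * Uᴴ) = U * (X * Y) * Uᴴ := by
  calc _ = U * X * (Uᴴ * U) * Y * Uᴴ := by simp only [mul_assoc]
    _ = _ := by rw [hU, mul_one, mul_assoc U]

lemma Matrix.conjTranspose_mul_conj_mul {m : Type*} [Fintype m] [DecidableEq m]
    {U : Matrix m m ℂ} (hU : Uᴴ * U = 1) (X : Matrix m m ℂ) : Uᴴ * (U * X * Uᴴ) * U = X := by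
  calc _ = (Uᴴ * U) * X * (Uᴴ * U) := by simp only [mul_assoc]
    _ = X := by rw [hU, one_mul, mul_one]

lemma Matrix.conj_normal_of_isDiag {m : Type*} [Fintype m] [DecidableEq m] {U D : Matrix m m ℂ}
    (hU : Uᴴ * U = 1) (hD : D.IsDiag) :
    (U * D * Uᴴ)ᴴ * (U * D * Uᴴ) = (U * D * Uᴴ) * (U * D * Uᴴ)ᴴ := by
  have h : (U * D * Uᴴ)ᴴ = U * Dᴴ * Uᴴ := by simp [mul_assoc]
  rw [h, conj_mul_conj hU, conj_mul_conj hU, hD.conjTranspose_mul_self_comm]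

/-- A normal matrix annihilating its symplectic adjoint is diagonalized by a unitary symplectic
matrix. -/
lemma exists_unitary_symplectic_diagonalization_of_mul_adjoint_eq_zero {n : ℕ}
    {N : Matrix (Fin n ⊕ Fin n) (Fin n ⊕ Fin n) ℂ} (hN : Nᴴ * N = N * Nᴴ)
    (h0 : N * ((Jmat n)ᵀ * Nᴴ * Jmat n) = 0) :
    ∃ S M : Matrix (Fin n ⊕ Fin n) (Fin n ⊕ Fin n) ℂ,
      Sᴴ * S = 1 ∧ S * Jmat n = Jmat n * S ∧ M.IsDiag ∧ N = S * M * Sᴴ := by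
  obtain ⟨W, μ, hW, hNW⟩ := exists_unitary_diagonalization N hN
  have hW' := mul_eq_one_comm.mp hW
  have hNeq : N = W * diagonal μ * Wᴴ := by rw [← hNW, mul_assoc, hW', mul_one]
  have hiso : diagonal μ * (Wᴴ * Jmat n * W) * (diagonal μ)ᴴ = 0 := by
    have h1 : N * Jmat n * Nᴴ = 0 := by
      have h2 : N * Jmat n * Nᴴ = N * ((Jmat n)ᵀ * Nᴴ * Jmat n) * Jmat n := by
        rw [Jmat_transpose]
        calc _ = -(N * Jmat n * Nᴴ * (Jmat n * Jmat n)) := by rw [Jmat_mul_Jmat]; simp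
          _ = _ := by simp only [neg_mul, mul_neg, mul_assoc]
      rw [h2, h0, zero_mul]
    have h3 : (diagonal μ)ᴴ * Wᴴ = Wᴴ * Nᴴ := by
      rw [← conjTranspose_mul, ← conjTranspose_mul, hNW]
    calc _ = (Wᴴ * W) * diagonal μ * Wᴴ * Jmat n * W * (diagonal μ)ᴴ * (Wᴴ * W) := by
          simp only [hW, one_mul, mul_one, mul_assoc]
      _ = Wᴴ * (W * diagonal μ) * Wᴴ * Jmat n * W * ((diagonal μ)ᴴ * Wᴴ) * W := by
          simp only [mul_assoc]
      _ = Wᴴ * (N * (W * Wᴴ) * Jmat n * (W * Wᴴ) * Nᴴ) * W := by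
          rw [← hNW, h3]; simp only [mul_assoc]
      _ = 0 := by rw [hW', mul_one, mul_one, h1, mul_zero, zero_mul]
  obtain ⟨S, f, hS, hSJ, hSf⟩ := exists_unitary_symplectic_extending_columns
    (T := {t | μ t ≠ 0}) W (fun i _ j _ => by rw [hW]) (fun i hi j hj => by
      have h := congrFun (congrFun hiso i) j
      rw [diagonal_conjTranspose, mul_diagonal, diagonal_mul] at h
      simpa [show μ i ≠ 0 from hi, show μ j ≠ 0 from hj] using h)
  have hS' := mul_eq_one_comm.mp hS
  refine ⟨S, Sᴴ * N * S, hS, hSJ, ?_, ?_⟩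
  · have hcol : ∀ (t : {t | μ t ≠ 0}) i,
        (Sᴴ * W) i t = (1 : Matrix (Fin n ⊕ Fin n) (Fin n ⊕ Fin n) ℂ) i (Sum.inl (f t)) := by
      intro t i
      rw [← hS]
      simp [mul_apply, hSf]
    intro k l hkl
    have h : Sᴴ * N * S = (Sᴴ * W) * diagonal μ * (Sᴴ * W)ᴴ := by
      rw [hNeq]
      simp [mul_assoc]
    rw [h, mul_apply]
    refine Finset.sum_eq_zero fun t _ => ?_
    rw [mul_diagonal, conjTranspose_apply]
    by_cases ht : μ t = 0
    · simp [ht]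
    · rw [hcol ⟨t, ht⟩, hcol ⟨t, ht⟩]
      by_cases hk : k = Sum.inl (f ⟨t, ht⟩)
      · rw [one_apply_ne (i := l) (by rintro rfl; exact hkl hk)]
        simp
      · rw [one_apply_ne hk]
        simp
  · calc N = (S * Sᴴ) * N * (S * Sᴴ) := by rw [hS', one_mul, mul_one]
      _ = _ := by simp only [mul_assoc]

theorem stmt16 (n : ℕ) (A : Matrix (Fin n ⊕ Fin n) (Fin n ⊕ Fin n) ℂ) :
    (Aᴴ * A = A * Aᴴ ∧ (Jmat n)ᵀ * Aᴴ * Jmat n = -A ∧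
      ∃ S : Matrix (Fin n ⊕ Fin n) (Fin n ⊕ Fin n) ℂ,
        Sᴴ * Jmat n * S = Jmat n ∧ (S⁻¹ * A * S).IsDiag) ↔
    ∃ N : Matrix (Fin n ⊕ Fin n) (Fin n ⊕ Fin n) ℂ,
      Nᴴ * N = N * Nᴴ ∧
      N * ((Jmat n)ᵀ * Nᴴ * Jmat n) = 0 ∧
      ((Jmat n)ᵀ * Nᴴ * Jmat n) * N = 0 ∧
      A = N - (Jmat n)ᵀ * Nᴴ * Jmat n := by
  constructor
  · rintro ⟨hA, hHam, S, hS, hD⟩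
    obtain ⟨U, D, hU, hUJ, hdiag, rfl⟩ := exists_unitary_symplectic_diagonalization hA hS hD
    have hDJ : (Jmat n)ᵀ * Dᴴ * Jmat n = -D := by
      rw [Jmat_adjoint_conj hUJ, ← neg_mul, ← mul_neg] at hHam
      rw [← conjTranspose_mul_conj_mul hU (_ * _ * _), hHam, conjTranspose_mul_conj_mul hU]
    rw [← fromBlocks_toBlocks D] at hdiag hDJ ⊢
    set a := D.toBlocks₁₁
    obtain ⟨ha, hb, hc, -⟩ := isDiag_fromBlocks_iff.mp hdiag
    rw [Jmat_adjoint_fromBlocks, fromBlocks_neg, fromBlocks_inj] at hDJ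
    have hd : D.toBlocks₂₂ = -aᴴ := by rw [hDJ.2.2.2, neg_neg]
    have hE : (fromBlocks a 0 0 0 : Matrix (Fin n ⊕ Fin n) (Fin n ⊕ Fin n) ℂ).IsDiag :=
      ha.fromBlocks isDiag_zero
    refine ⟨U * fromBlocks a 0 0 0 * Uᴴ, conj_normal_of_isDiag hU hE, ?_, ?_, ?_⟩
    · rw [Jmat_adjoint_conj hUJ, conj_mul_conj hU, Jmat_adjoint_fromBlocks, fromBlocks_multiply]
      simp
    · rw [Jmat_adjoint_conj hUJ, conj_mul_conj hU, Jmat_adjoint_fromBlocks, fromBlocks_multiply]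
      simp
    · rw [Jmat_adjoint_conj hUJ, Jmat_adjoint_fromBlocks, ← sub_mul, ← mul_sub, hb, hc, hd,
        sub_eq_add_neg, fromBlocks_neg, fromBlocks_add]
      simp
  · rintro ⟨N, hN, h0, -, rfl⟩
    obtain ⟨S, M, hS, hSJ, hM, hNM⟩ :=
      exists_unitary_symplectic_diagonalization_of_mul_adjoint_eq_zero hN h0
    have hA : N - (Jmat n)ᵀ * Nᴴ * Jmat n = S * (M - (Jmat n)ᵀ * Mᴴ * Jmat n) * Sᴴ := by
      rw [hNM, Jmat_adjoint_conj hSJ, mul_sub, sub_mul]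
    have hD := hM.sub hM.Jmat_adjoint
    refine ⟨?_, ?_, S, ?_, ?_⟩
    · rw [hA]
      exact conj_normal_of_isDiag hS hD
    · rw [conjTranspose_sub, mul_sub, sub_mul, Jmat_adjoint_adjoint, neg_sub]
    · rw [mul_assoc, ← hSJ, ← mul_assoc, hS, one_mul]
    · rw [hA, inv_eq_left_inv hS]
      rwa [conjTranspose_mul_conj_mul hS]
end

section
/- A matrix A ∈ M_{2n}(ℂ) is normal, skew-Hamiltonian, and symplectically diagonalizable if and only if A = N + N⋆ for some normal matrix N with NN⋆ = N⋆N = 0, where N⋆ = JᵀNᴴJ, J = J_{2n}. -/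
open Matrix

lemma DirectSum.IsInternal.exists_orthonormalBasis_mem {ι E : Type*} [DecidableEq ι]
    [NormedAddCommGroup E] [InnerProductSpace ℂ E] [FiniteDimensional ℂ E] {n : ℕ}
    (hn : Module.finrank ℂ E = n) {V : ι → Submodule ℂ E} (hV : DirectSum.IsInternal V)
    (hV' : OrthogonalFamily ℂ (fun i => V i) fun i => (V i).subtypeₗᵢ) :
    ∃ (b : OrthonormalBasis (Fin n) ℂ E) (c : Fin n → ι), ∀ a, b a ∈ V (c a) := by
  classical
  have : Fintype {i // V i ≠ ⊥} :=
    (WellFoundedGT.finite_ne_bot_of_iSupIndep hV.submodule_iSupIndep).fintype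
  have hint := DirectSum.isInternal_ne_bot_iff.mpr hV
  have hort := hV'.comp (Subtype.val_injective (p := fun i => V i ≠ ⊥))
  exact ⟨hint.subordinateOrthonormalBasis hn hort,
    fun a => (hint.subordinateOrthonormalBasisIndex hn a hort).1,
    fun a => hint.subordinateOrthonormalBasis_subordinate hn a hort⟩

lemma Orthonormal.conjTranspose_mul_self_of_columns {m k : Type*} [Fintype m] [DecidableEq k]
    {v : k → EuclideanSpace ℂ m} (hv : Orthonormal ℂ v) :
    (Matrix.of fun i j => v j i)ᴴ * (Matrix.of fun i j => v j i) = (1 : Matrix k k ℂ) := by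
  ext i j
  have h := orthonormal_iff_ite.mp hv i j
  rw [Matrix.one_apply, ← h, PiLp.inner_apply, Matrix.mul_apply]
  simp [mul_comm]

lemma exists_unitary_diagonalization_of_normal {n : ℕ} {M : Matrix (Fin n) (Fin n) ℂ}
    (hM : Mᴴ * M = M * Mᴴ) :
    ∃ (W : Matrix (Fin n) (Fin n) ℂ) (d : Fin n → ℂ),
      Wᴴ * W = 1 ∧ M * W = W * diagonal d := by
  classical
  let H : Matrix (Fin n) (Fin n) ℂ := M + Mᴴ
  let K : Matrix (Fin n) (Fin n) ℂ := Complex.I • (M - Mᴴ)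
  have hH : H.IsHermitian := by
    simp [H, Matrix.IsHermitian, add_comm]
  have hK : K.IsHermitian := by
    simp only [K, Matrix.IsHermitian, conjTranspose_smul, conjTranspose_sub,
      conjTranspose_conjTranspose, Complex.star_def, Complex.conj_I, neg_smul, ← smul_neg, neg_sub]
  have hHK : Commute (toEuclideanLin H) (toEuclideanLin K) := by
    have h : H * K = K * H := by
      simp only [H, K, Matrix.mul_smul, Matrix.smul_mul]
      congr 1
      simp only [mul_add, add_mul, mul_sub, sub_mul, hM]
      abel
    apply LinearMap.ext
    intro x
    simp only [Module.End.mul_apply, toLpLin_apply, mulVec_mulVec, h]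
  have hHs := isSymmetric_toEuclideanLin_iff.mpr hH
  have hKs := isSymmetric_toEuclideanLin_iff.mpr hK
  obtain ⟨b, c, hb⟩ :=
    (LinearMap.IsSymmetric.directSum_isInternal_of_commute hHs hKs hHK).exists_orthonormalBasis_mem
      finrank_euclideanSpace_fin
      (LinearMap.IsSymmetric.orthogonalFamily_eigenspace_inf_eigenspace hHs hKs)
  refine ⟨Matrix.of fun i j => b j i, fun a => 2⁻¹ * ((c a).2 - Complex.I * (c a).1),
    b.orthonormal.conjTranspose_mul_self_of_columns, ?_⟩
  have hMHK : M = (2⁻¹ : ℂ) • (H - Complex.I • K) := by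
    simp only [H, K, smul_smul, Complex.I_mul_I, neg_smul, one_smul, sub_neg_eq_add]
    rw [show M + Mᴴ + (M - Mᴴ) = (2 : ℂ) • M by rw [two_smul]; abel, smul_smul]
    norm_num
  ext i j
  have h1 := congrArg (fun x : EuclideanSpace ℂ (Fin n) => x i)
    (Module.End.mem_eigenspace_iff.mp (hb j).1)
  have h2 := congrArg (fun x : EuclideanSpace ℂ (Fin n) => x i)
    (Module.End.mem_eigenspace_iff.mp (hb j).2)
  simp only [toLpLin_apply, PiLp.smul_apply, smul_eq_mul] at h1 h2
  rw [mul_diagonal]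
  change (M *ᵥ (b j).ofLp) i = b j i * _
  rw [hMHK, smul_mulVec, sub_mulVec, smul_mulVec]
  simp only [Pi.smul_apply, Pi.sub_apply, smul_eq_mul, h1, h2]
  ring

lemma exists_unitary_mul_eq_of_conjTranspose_mul_self_eq {k l : Type*} [Fintype k] [Fintype l]
    [DecidableEq k] [DecidableEq l] {X Y : Matrix k l ℂ} (h : Xᴴ * X = Yᴴ * Y) :
    ∃ T : Matrix k k ℂ, Tᴴ * T = 1 ∧ T * X = Y := by
  have hnorm : ∀ x, ‖toEuclideanLin X x‖ = ‖toEuclideanLin Y x‖ := by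
    have key : ∀ (Z : Matrix k l ℂ) (x : EuclideanSpace ℂ l),
        inner ℂ (toEuclideanLin Z x) (toEuclideanLin Z x) =
          star x.ofLp ⬝ᵥ ((Zᴴ * Z) *ᵥ x.ofLp) := by
      intro Z x
      rw [EuclideanSpace.inner_eq_star_dotProduct, dotProduct_comm]
      simp only [toLpLin_apply]
      rw [star_mulVec, ← mulVec_mulVec, dotProduct_mulVec, dotProduct_mulVec, dotProduct_mulVec]
    intro x
    have h' : inner ℂ (toEuclideanLin X x) (toEuclideanLin X x) =
        inner ℂ (toEuclideanLin Y x) (toEuclideanLin Y x) := by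
      rw [key, key, h]
    rw [@norm_eq_sqrt_re_inner ℂ, @norm_eq_sqrt_re_inner ℂ _ _ _ _ (toEuclideanLin Y x), h']
  obtain ⟨s, hs⟩ := (toEuclideanLin X).rangeRestrict.exists_rightInverse_of_surjective
    (LinearMap.range_rangeRestrict _)
  have hs' : ∀ y, toEuclideanLin X (s y) = y := fun y =>
    congrArg Subtype.val (LinearMap.congr_fun hs y)
  let L : (toEuclideanLin X).range →ₗᵢ[ℂ] EuclideanSpace ℂ k :=
    { toLinearMap := toEuclideanLin Y ∘ₗ s
      norm_map' := fun y => by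
        rw [LinearMap.comp_apply, ← hnorm, hs']
        rfl }
  have hL : ∀ x, L.extend (toEuclideanLin X x) = toEuclideanLin Y x := by
    intro x
    have h1 := L.extend_apply ⟨toEuclideanLin X x, x, rfl⟩
    rw [h1]
    change toEuclideanLin Y (s _) = _
    rw [← sub_eq_zero, ← map_sub, ← norm_eq_zero, ← hnorm, map_sub, hs', sub_self, norm_zero]
  let b := EuclideanSpace.basisFun k ℂ
  refine ⟨Matrix.of fun i j => L.extend (b j) i,
    (b.orthonormal.comp_linearIsometry L.extend).conjTranspose_mul_self_of_columns, ?_⟩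
  ext i j
  have h2 := congrArg (fun x : EuclideanSpace ℂ k => x i) (hL (EuclideanSpace.single j 1))
  rw [← b.sum_repr (toEuclideanLin X (EuclideanSpace.single j 1)), map_sum] at h2
  simpa [toLpLin_apply, Matrix.mul_apply, mul_comm, b] using h2

lemma exists_lagrangian_of_isotropic {n : ℕ} {l : Type*} [Fintype l] [DecidableEq l]
    {N : Matrix (Fin n ⊕ Fin n) l ℂ} (hN : Nᴴ * Jmat n * N = 0) :
    ∃ V : Matrix (Fin n ⊕ Fin n) (Fin n) ℂ,
      Vᴴ * V = 1 ∧ Vᴴ * Jmat n * V = 0 ∧ V * Vᴴ * N = N := by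
  obtain ⟨P, Q, rfl⟩ : ∃ P Q, N = fromRows P Q := ⟨N.toRows₁, N.toRows₂, by simp⟩
  have hPQ : Pᴴ * Q = Qᴴ * P := by
    rw [Jmat, Matrix.mul_assoc, fromBlocks_mul_fromRows,
      conjTranspose_fromRows_eq_fromCols_conjTranspose, fromCols_mul_fromRows] at hN
    simpa [← sub_eq_add_neg, sub_eq_zero] using hN
  obtain ⟨T, hT, hTX⟩ := exists_unitary_mul_eq_of_conjTranspose_mul_self_eq
    (X := P + Complex.I • Q) (Y := P - Complex.I • Q) (by
      simp only [conjTranspose_add, conjTranspose_sub, conjTranspose_smul, Matrix.add_mul,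
        Matrix.mul_add, Matrix.sub_mul, Matrix.mul_sub, Matrix.smul_mul, Matrix.mul_smul, hPQ,
        Complex.star_def, Complex.conj_I]
      module)
  let V : Matrix (Fin n ⊕ Fin n) (Fin n) ℂ :=
    fromRows ((2⁻¹ : ℂ) • (1 + T)) ((-(2⁻¹ * Complex.I)) • (1 - T))
  have hVV : Vᴴ * V = 1 := by
    simp only [V, conjTranspose_fromRows_eq_fromCols_conjTranspose, fromCols_mul_fromRows,
      conjTranspose_add, conjTranspose_sub, conjTranspose_smul, Matrix.add_mul,
      Matrix.mul_add, Matrix.sub_mul, Matrix.mul_sub, Matrix.smul_mul, Matrix.mul_smul, hT,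
      conjTranspose_one, Matrix.one_mul, Matrix.mul_one]
    simp only [star_neg, star_mul', star_inv₀, star_ofNat, Complex.star_def, Complex.conj_I]
    match_scalars <;> ring_nf <;> simp <;> norm_num
  have hVN : V * (P + Complex.I • Q) = fromRows P Q := by
    simp only [V, fromRows_mul, Matrix.smul_mul, Matrix.add_mul, Matrix.sub_mul, Matrix.one_mul,
      hTX]
    congr 1
    · module
    · match_scalars <;> ring_nf <;> simp
  refine ⟨V, hVV, ?_, ?_⟩
  · simp only [V, Jmat, Matrix.mul_assoc, fromBlocks_mul_fromRows,
      conjTranspose_fromRows_eq_fromCols_conjTranspose, fromCols_mul_fromRows,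
      conjTranspose_add, conjTranspose_sub, conjTranspose_smul, Matrix.add_mul,
      Matrix.mul_add, Matrix.sub_mul, Matrix.mul_sub, Matrix.smul_mul, Matrix.mul_smul, hT,
      conjTranspose_one, Matrix.one_mul, Matrix.mul_one, Matrix.zero_mul, Matrix.mul_zero, Matrix.neg_mul,
      Matrix.mul_neg]
    simp only [star_neg, star_mul', star_inv₀, star_ofNat, Complex.star_def, Complex.conj_I]
    module
  · rw [← hVN, Matrix.mul_assoc, ← Matrix.mul_assoc Vᴴ, hVV, Matrix.one_mul]

section Normal

open scoped ComplexOrder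

variable {m : Type*} [Fintype m]

lemma mul_eq_zero_of_mul_conjTranspose_eq_zero {k : Type*} [Fintype k] {N : Matrix m m ℂ}
    (hN : Nᴴ * N = N * Nᴴ) {Z : Matrix k m ℂ} (h : Z * Nᴴ = 0) : Z * N = 0 := by
  rw [← self_mul_conjTranspose_eq_zero, conjTranspose_mul, Matrix.mul_assoc, ← Matrix.mul_assoc N,
    ← hN, Matrix.mul_assoc, ← Matrix.mul_assoc, h, Matrix.zero_mul]

lemma conjTranspose_mul_eq_zero_of_mul_eq_zero {k : Type*} [Fintype k] {N : Matrix m m ℂ}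
    (hN : Nᴴ * N = N * Nᴴ) {Z : Matrix m k ℂ} (h : N * Z = 0) : Nᴴ * Z = 0 := by
  rw [← conjTranspose_mul_self_eq_zero, conjTranspose_mul, conjTranspose_conjTranspose,
    Matrix.mul_assoc, ← Matrix.mul_assoc N, ← hN, Matrix.mul_assoc, h, Matrix.mul_zero,
    Matrix.mul_zero]

/-- A subspace invariant under a normal matrix reduces it. -/
lemma commute_projection_of_normal [DecidableEq m] {A P : Matrix m m ℂ} (hA : Aᴴ * A = A * Aᴴ)
    (hP : P.IsHermitian) (hPP : P * P = P) (hAP : P * A * P = A * P) : P * A = A * P := by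
  have hQ : P * A * (1 - P) = 0 := by
    rw [← trace_mul_conjTranspose_self_eq_zero_iff]
    have hstar : P * Aᴴ * P = P * Aᴴ := by
      simpa [Matrix.mul_assoc, hP.eq] using congrArg conjTranspose hAP
    have e1 : (P * A * (1 - P)) * (P * A * (1 - P))ᴴ = P * (A * Aᴴ) * P - A * P * Aᴴ * P := by
      simp only [conjTranspose_mul, conjTranspose_sub, conjTranspose_one, hP.eq]
      calc P * A * (1 - P) * ((1 - P) * (Aᴴ * P))
          = P * A * Aᴴ * P - P * A * P * Aᴴ * P - P * A * P * Aᴴ * P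
            + P * A * (P * P) * Aᴴ * P := by noncomm_ring
        _ = _ := by rw [hPP, hAP]; noncomm_ring
    rw [e1, ← hA, trace_sub, sub_eq_zero]
    calc (P * (Aᴴ * A) * P).trace = (P * Aᴴ * (A * P)).trace := by simp only [Matrix.mul_assoc]
      _ = (P * Aᴴ * (P * A * P)).trace := by rw [hAP]
      _ = (P * Aᴴ * P * (A * P)).trace := by simp only [Matrix.mul_assoc]
      _ = (A * P * (P * Aᴴ)).trace := by rw [hstar, trace_mul_comm]
      _ = (A * (P * P) * Aᴴ).trace := by simp only [Matrix.mul_assoc]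
      _ = (A * (P * Aᴴ * P)).trace := by rw [hPP, hstar, Matrix.mul_assoc]
      _ = (A * P * Aᴴ * P).trace := by simp only [Matrix.mul_assoc]
  rw [Matrix.mul_sub, Matrix.mul_one, sub_eq_zero] at hQ
  rw [hQ, hAP]

end Normal

open scoped ComplexOrder in
/-- An invariant Lagrangian subspace splits a normal skew-Hamiltonian matrix. -/
lemma exists_normal_splitting_of_lagrangian {n : ℕ}
    {A : Matrix (Fin n ⊕ Fin n) (Fin n ⊕ Fin n) ℂ} (hA : Aᴴ * A = A * Aᴴ)
    (hAJ : (Jmat n)ᵀ * Aᴴ * Jmat n = A) {V R : Matrix (Fin n ⊕ Fin n) (Fin n) ℂ}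
    {C : Matrix (Fin n) (Fin n) ℂ} (hR : Rᴴ * V = 1) (hVJ : Vᴴ * Jmat n * V = 0)
    (hAV : A * V = V * C) :
    ∃ N : Matrix (Fin n ⊕ Fin n) (Fin n ⊕ Fin n) ℂ,
      Nᴴ * N = N * Nᴴ ∧
      N * ((Jmat n)ᵀ * Nᴴ * Jmat n) = 0 ∧
      ((Jmat n)ᵀ * Nᴴ * Jmat n) * N = 0 ∧
      A = N + (Jmat n)ᵀ * Nᴴ * Jmat n := by
  have hG : (Vᴴ * V).PosDef := by
    refine Matrix.PosDef.conjTranspose_mul_self V fun x y hxy => ?_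
    simpa [hR] using congrArg (Rᴴ *ᵥ ·) hxy
  have hdet : IsUnit (Vᴴ * V).det := (Matrix.isUnit_iff_isUnit_det _).mp hG.isUnit
  have hGinv : ((Vᴴ * V)⁻¹).IsHermitian := hG.isHermitian.inv
  obtain ⟨G, hGdef⟩ : ∃ G, G = (Vᴴ * V)⁻¹ := ⟨_, rfl⟩
  have hG1 : Vᴴ * V * G = 1 := by rw [hGdef, mul_nonsing_inv _ hdet]
  have hG2 : G * (Vᴴ * V) = 1 := by rw [hGdef, nonsing_inv_mul _ hdet]
  rw [← hGdef] at hGinv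
  obtain ⟨P, hPdef⟩ : ∃ P, P = V * G * Vᴴ := ⟨_, rfl⟩
  have hPH : P.IsHermitian := by
    simp [hPdef, Matrix.IsHermitian, conjTranspose_mul, hGinv.eq, Matrix.mul_assoc]
  have hPV : P * V = V := by rw [hPdef, Matrix.mul_assoc, Matrix.mul_assoc, hG2, Matrix.mul_one]
  have hPP : P * P = P := by
    nth_rw 2 [hPdef]
    rw [← Matrix.mul_assoc, ← Matrix.mul_assoc, hPV, ← hPdef]
  have hPJP : P * Jmat n * P = 0 := by
    have : P * Jmat n * P = V * G * (Vᴴ * Jmat n * V) * (G * Vᴴ) := by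
      rw [hPdef]; simp only [Matrix.mul_assoc]
    rw [this, hVJ, Matrix.mul_zero, Matrix.zero_mul]
  have hPtr : P.trace = n := by
    rw [hPdef, trace_mul_comm, ← Matrix.mul_assoc, hG1]; simp
  have hPA : P * A = A * P := by
    refine commute_projection_of_normal hA hPH hPP ?_
    have : A * P = V * (C * G * Vᴴ) := by
      rw [hPdef, ← Matrix.mul_assoc, ← Matrix.mul_assoc, hAV]; simp only [Matrix.mul_assoc]
    rw [Matrix.mul_assoc, this, ← Matrix.mul_assoc, hPV]
  have hPA' : P * Aᴴ = Aᴴ * P := by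
    simpa [hPH.eq] using (congrArg conjTranspose hPA).symm
  have hJJ := Jmat_mul_Jmat n
  rw [Jmat_transpose] at hAJ
  have hAJ' : A * Jmat n = Jmat n * Aᴴ := by
    nth_rw 1 [← hAJ]
    simp [Matrix.mul_assoc, hJJ]
  obtain ⟨Q, hQ⟩ : ∃ Q, Q = -(Jmat n * P * Jmat n) := ⟨_, rfl⟩
  have hQQ : Q * Q = Q := by
    calc Q * Q = Jmat n * P * (Jmat n * Jmat n) * P * Jmat n := by rw [hQ]; noncomm_ring
      _ = -(Jmat n * (P * P) * Jmat n) := by rw [hJJ]; noncomm_ring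
      _ = Q := by rw [hPP, hQ]
  have hPQ : P * Q = 0 := by
    calc P * Q = -(P * Jmat n * P * Jmat n) := by rw [hQ]; noncomm_ring
      _ = 0 := by rw [hPJP]; simp
  have hQP : Q * P = 0 := by
    calc Q * P = -(Jmat n * (P * Jmat n * P)) := by rw [hQ]; noncomm_ring
      _ = 0 := by rw [hPJP]; simp
  have hQH : Q.IsHermitian := by
    simp [Matrix.IsHermitian, hQ, hPH.eq, Jmat_conjTranspose, Matrix.mul_assoc]
  have hcompl : P + Q = 1 := by
    have hE : (1 - P - Q)ᴴ * (1 - P - Q) = 1 - P - Q := by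
      rw [conjTranspose_sub, conjTranspose_sub, conjTranspose_one, hPH.eq, hQH.eq]
      simp only [Matrix.sub_mul, Matrix.mul_sub, Matrix.one_mul, Matrix.mul_one, hPP, hQQ, hPQ, hQP]
      abel
    have hE0 : 1 - P - Q = 0 := by
      have hQtr : Q.trace = n := by
        rw [hQ, trace_neg, trace_mul_comm, ← Matrix.mul_assoc, hJJ]
        simp [hPtr]
      rw [← trace_conjTranspose_mul_self_eq_zero_iff, hE, trace_sub, trace_sub, hPtr, hQtr]
      simp
    rw [sub_sub, sub_eq_zero] at hE0
    exact hE0.symm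
  have hNH : (A * P)ᴴ = Aᴴ * P := by rw [conjTranspose_mul, hPH.eq, hPA']
  have hstar : (Jmat n)ᵀ * (A * P)ᴴ * Jmat n = A * Q := by
    rw [hNH, Jmat_transpose, hQ, Matrix.neg_mul, ← Matrix.mul_assoc, ← hAJ']
    noncomm_ring
  have hstar' : A * Q = Q * A := by
    have hQ' : Q = 1 - P := by rw [← hcompl]; abel
    rw [hQ', Matrix.mul_sub, Matrix.sub_mul, hPA, Matrix.mul_one, Matrix.one_mul]
  refine ⟨A * P, ?_, ?_, ?_, ?_⟩
  · calc (A * P)ᴴ * (A * P) = Aᴴ * (P * A) * P := by rw [hNH]; simp only [Matrix.mul_assoc]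
      _ = Aᴴ * A * (P * P) := by rw [hPA]; simp only [Matrix.mul_assoc]
      _ = A * (P * P * Aᴴ) := by rw [hA, hPP, hPA', Matrix.mul_assoc]
      _ = A * P * (A * P)ᴴ := by rw [hNH, ← hPA']; simp only [Matrix.mul_assoc]
  · rw [hstar, hstar', Matrix.mul_assoc, ← Matrix.mul_assoc P, hPQ, Matrix.zero_mul,
      Matrix.mul_zero]
  · rw [hstar, ← hPA, Matrix.mul_assoc, ← Matrix.mul_assoc Q, hQP, Matrix.zero_mul,
      Matrix.mul_zero]
  · rw [hstar, ← Matrix.mul_add, hcompl, Matrix.mul_one]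

/-- A normal matrix supported on a Lagrangian subspace is the upper-left block of a diagonal
matrix in suitable unitary symplectic coordinates. -/
lemma exists_unitary_lagrangian_diagonalization {n : ℕ}
    {N : Matrix (Fin n ⊕ Fin n) (Fin n ⊕ Fin n) ℂ} (hN : Nᴴ * N = N * Nᴴ)
    (hNJ : Nᴴ * Jmat n * N = 0) :
    ∃ (U : Matrix (Fin n ⊕ Fin n) (Fin n) ℂ) (d : Fin n → ℂ),
      Uᴴ * U = 1 ∧ Uᴴ * Jmat n * U = 0 ∧ N = U * diagonal d * Uᴴ := by
  obtain ⟨V, hVV, hVJ, hVN⟩ := exists_lagrangian_of_isotropic hNJ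
  have hVN' : Nᴴ * (V * Vᴴ) = Nᴴ := by
    simpa [Matrix.mul_assoc] using congrArg conjTranspose hVN
  have hNV : N * (V * Vᴴ) = N := by
    have h0 : (1 - V * Vᴴ) * N = 0 := by rw [Matrix.sub_mul, hVN, Matrix.one_mul, sub_self]
    have h1 : N * (1 - V * Vᴴ) = 0 := by
      have hN' : (Nᴴ)ᴴ * Nᴴ = Nᴴ * (Nᴴ)ᴴ := by rw [conjTranspose_conjTranspose, hN]
      have := conjTranspose_mul_eq_zero_of_mul_eq_zero hN' (Z := 1 - V * Vᴴ) (by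
        rw [Matrix.mul_sub, hVN', Matrix.mul_one, sub_self])
      rwa [conjTranspose_conjTranspose] at this
    rw [Matrix.mul_sub, Matrix.mul_one, sub_eq_zero] at h1
    exact h1.symm
  obtain ⟨W, d, hW, hd⟩ := exists_unitary_diagonalization_of_normal (M := Vᴴ * N * V) (by
    have h1 : (Vᴴ * N * V)ᴴ * (Vᴴ * N * V) = Vᴴ * (Nᴴ * (V * Vᴴ)) * N * V := by
      simp [Matrix.mul_assoc]
    have h2 : (Vᴴ * N * V) * (Vᴴ * N * V)ᴴ = Vᴴ * (N * (V * Vᴴ)) * Nᴴ * V := by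
      simp [Matrix.mul_assoc]
    rw [h1, h2, hVN', hNV, Matrix.mul_assoc Vᴴ, hN, ← Matrix.mul_assoc Vᴴ])
  have hW' : W * Wᴴ = 1 := mul_eq_one_comm.mp hW
  refine ⟨V * W, d, ?_, ?_, ?_⟩
  · rw [conjTranspose_mul, Matrix.mul_assoc, ← Matrix.mul_assoc Vᴴ, hVV, Matrix.one_mul, hW]
  · have : (V * W)ᴴ * Jmat n * (V * W) = Wᴴ * (Vᴴ * Jmat n * V) * W := by
      simp [Matrix.mul_assoc]
    rw [this, hVJ, Matrix.mul_zero, Matrix.zero_mul]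
  · calc N = V * Vᴴ * N * (V * Vᴴ) := by rw [hVN, hNV]
      _ = V * (Vᴴ * N * V * (W * Wᴴ)) * Vᴴ := by rw [hW']; simp [Matrix.mul_assoc]
      _ = V * ((Vᴴ * N * V * W) * Wᴴ) * Vᴴ := by simp only [Matrix.mul_assoc]
      _ = V * W * diagonal d * (V * W)ᴴ := by rw [hd]; simp [Matrix.mul_assoc]

lemma isDiag_conj_of_unitary_lagrangian {n : ℕ} {U : Matrix (Fin n ⊕ Fin n) (Fin n) ℂ}
    {d : Fin n → ℂ} {A N : Matrix (Fin n ⊕ Fin n) (Fin n ⊕ Fin n) ℂ} (hU : Uᴴ * U = 1)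
    (hUJ : Uᴴ * Jmat n * U = 0) (hN : N = U * diagonal d * Uᴴ)
    (hA : A = N + (Jmat n)ᵀ * Nᴴ * Jmat n) :
    Aᴴ * A = A * Aᴴ ∧ ∃ S : Matrix (Fin n ⊕ Fin n) (Fin n ⊕ Fin n) ℂ,
      Sᴴ * Jmat n * S = Jmat n ∧ (S⁻¹ * A * S).IsDiag := by
  have hJJ := Jmat_mul_Jmat n
  let S : Matrix (Fin n ⊕ Fin n) (Fin n ⊕ Fin n) ℂ := fromCols U (-(Jmat n * U))
  let D : Matrix (Fin n ⊕ Fin n) (Fin n ⊕ Fin n) ℂ := diagonal (Sum.elim d (star d))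
  have hJU : Jmat n * (Jmat n * U) = -U := by
    rw [← Matrix.mul_assoc, hJJ]; simp
  have hUJJU : Uᴴ * (Jmat n * (Jmat n * U)) = -1 := by
    rw [hJU, Matrix.mul_neg, hU]
  have hUJU : Uᴴ * (Jmat n * U) = 0 := by rw [← Matrix.mul_assoc, hUJ]
  have hSS : Sᴴ * S = 1 := by
    simp only [S, conjTranspose_fromCols_eq_fromRows_conjTranspose, fromRows_mul_fromCols,
      conjTranspose_neg, conjTranspose_mul, Jmat_conjTranspose]
    simp [Matrix.mul_assoc, hU, hUJU, hUJJU]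
  have hSJS : Sᴴ * Jmat n * S = Jmat n := by
    have hJS : Jmat n * S = fromCols (Jmat n * U) U := by
      rw [mul_fromCols, Matrix.mul_neg, hJU, neg_neg]
    rw [Matrix.mul_assoc, hJS, conjTranspose_fromCols_eq_fromRows_conjTranspose,
      fromRows_mul_fromCols, conjTranspose_neg, conjTranspose_mul, Jmat_conjTranspose]
    simp only [Matrix.mul_neg, neg_neg, Matrix.mul_assoc, hUJU, hUJJU, hU]
    rfl
  have hASD : A = S * D * Sᴴ := by
    simp only [S, D, conjTranspose_fromCols_eq_fromRows_conjTranspose, ← fromBlocks_diagonal,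
      Matrix.mul_assoc, fromBlocks_mul_fromRows, fromCols_mul_fromRows]
    rw [hA, hN]
    simp [Matrix.mul_assoc, Jmat_transpose, Jmat_conjTranspose, diagonal_conjTranspose]
  refine ⟨?_, S, hSJS, ?_⟩
  · have hAH : Aᴴ = S * Dᴴ * Sᴴ := by rw [hASD]; simp [Matrix.mul_assoc]
    have key : ∀ X Y, S * X * Sᴴ * (S * Y * Sᴴ) = S * (X * Y) * Sᴴ := fun X Y => by
      calc S * X * Sᴴ * (S * Y * Sᴴ) = S * X * (Sᴴ * S) * Y * Sᴴ := by
            simp only [Matrix.mul_assoc]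
        _ = _ := by rw [hSS]; simp [Matrix.mul_assoc]
    rw [hAH, hASD, key, key]
    congr 2
    simp [D, diagonal_conjTranspose, mul_comm]
  · have hDS : S⁻¹ * A * S = D := by
      rw [inv_eq_left_inv hSS, hASD, Matrix.mul_assoc S, ← Matrix.mul_assoc Sᴴ, hSS, Matrix.one_mul,
        Matrix.mul_assoc, hSS, Matrix.mul_one]
    rw [hDS]
    exact isDiag_diagonal _

theorem stmt17 (n : ℕ) (A : Matrix (Fin n ⊕ Fin n) (Fin n ⊕ Fin n) ℂ) :
    (Aᴴ * A = A * Aᴴ ∧ (Jmat n)ᵀ * Aᴴ * Jmat n = A ∧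
      ∃ S : Matrix (Fin n ⊕ Fin n) (Fin n ⊕ Fin n) ℂ,
        Sᴴ * Jmat n * S = Jmat n ∧ (S⁻¹ * A * S).IsDiag) ↔
    ∃ N : Matrix (Fin n ⊕ Fin n) (Fin n ⊕ Fin n) ℂ,
      Nᴴ * N = N * Nᴴ ∧
      N * ((Jmat n)ᵀ * Nᴴ * Jmat n) = 0 ∧
      ((Jmat n)ᵀ * Nᴴ * Jmat n) * N = 0 ∧
      A = N + (Jmat n)ᵀ * Nᴴ * Jmat n := by
  have hJJ := Jmat_mul_Jmat n
  constructor
  · rintro ⟨hA, hAJ, S, hS, hdiag⟩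
    have hleft : (-(Jmat n) * Sᴴ * Jmat n) * S = 1 := by
      rw [Matrix.mul_assoc, Matrix.mul_assoc, ← Matrix.mul_assoc Sᴴ, hS, Matrix.neg_mul, hJJ,
        neg_neg]
    have hright := mul_eq_one_comm.mp hleft
    rw [inv_eq_left_inv hleft] at hdiag
    obtain ⟨D, hD⟩ : ∃ D, D = -(Jmat n) * Sᴴ * Jmat n * A * S := ⟨_, rfl⟩
    have hAS : A * S = S * D := by
      rw [hD]
      simp only [← Matrix.mul_assoc] at hright ⊢
      rw [hright, Matrix.one_mul]
    rw [← hD] at hdiag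
    have hD21 : D.toBlocks₂₁ = 0 := by
      ext i j
      exact hdiag Sum.inr_ne_inl
    obtain ⟨V, V', rfl⟩ : ∃ V V', S = fromCols V V' := ⟨S.toCols₁, S.toCols₂, by simp⟩
    obtain ⟨R, hR⟩ : ∃ R, R = -(Jmat n) * (fromCols V V')ᴴ * Jmat n := ⟨_, rfl⟩
    rw [← hR] at hleft
    refine exists_normal_splitting_of_lagrangian hA hAJ (V := V) (R := R.toRows₁ᴴ)
      (C := D.toBlocks₁₁) ?_ ?_ ?_
    · rw [conjTranspose_conjTranspose]
      rw [← fromRows_toRows R, fromRows_mul_fromCols, ← fromBlocks_one, fromBlocks_inj] at hleft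
      exact hleft.1
    · rw [Jmat, conjTranspose_fromCols_eq_fromRows_conjTranspose, fromRows_mul,
        fromRows_mul_fromCols, fromBlocks_inj] at hS
      exact hS.1
    · rw [← fromBlocks_toBlocks D, hD21, mul_fromCols, fromCols_mul_fromBlocks] at hAS
      simpa using (fromCols_inj hAS).1
  · rintro ⟨N, hN, hN1, -, hA⟩
    have hNJN : N * Jmat n * Nᴴ = 0 := by
      have h := congrArg (· * Jmat n) hN1
      simpa [Matrix.mul_assoc, Jmat_transpose, hJJ] using h
    have hiso : Nᴴ * Jmat n * N = 0 := by
      rw [Matrix.mul_assoc]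
      refine conjTranspose_mul_eq_zero_of_mul_eq_zero hN ?_
      rw [← Matrix.mul_assoc]
      exact mul_eq_zero_of_mul_conjTranspose_eq_zero hN hNJN
    obtain ⟨U, d, hU, hUJ, hNU⟩ := exists_unitary_lagrangian_diagonalization hN hiso
    obtain ⟨hnormal, hdiag⟩ := isDiag_conj_of_unitary_lagrangian hU hUJ hNU hA
    refine ⟨hnormal, ?_, hdiag⟩
    rw [hA, Jmat_transpose]
    have h : ∀ X : Matrix (Fin n ⊕ Fin n) (Fin n ⊕ Fin n) ℂ,
        Jmat n * (Jmat n * X) = -X := fun X => by rw [← Matrix.mul_assoc, hJJ]; simp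
    simp [Matrix.mul_add, Matrix.add_mul, Matrix.mul_assoc, Jmat_conjTranspose, hJJ, h, add_comm]
end
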